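/- arXiv:2211.01306 — 2 statements merged into one kernel-verified Lean document; each statement's English description precedes it below -/
import Mathlib

section
/- Let K ≥ 2, τ > 0, and β ∈ ℝ^K with all β_i > 0. Define h(x) = (∑_{j=1}^K β_j/x_j^τ)^{−K} ∏_{i=1}^K x_i^{−(τ+1)}, k(x) = ∑_{j=1}^K β_j/x_j^τ, and J_0 = 1/((K−1)! τ^{K−1} ∏_{i=1}^K β_i). Then for all indices i, j: ∫_{S_K} h(x) · K/(k(x)² x_i^τ x_j^τ) d^{K−1}x = J_0 (1 + δ_{ij}) / ((K+1) β_i β_j), where δ is the Kronecker delta. (The integrand equals h(x) ∂² log h(x)/∂β_i ∂β_j, so this computes the β–β block of the Fisher information of the Concrete distribution.) -/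
open MeasureTheory Finset

noncomputable def fillMap (K : ℕ) (u : Fin (K - 1) → ℝ) : Fin K → ℝ :=
  fun i => if h : (i : ℕ) < K - 1 then u ⟨i, h⟩ else 1 - ∑ j, u j

/-- The `(K-1)`-dimensional Lebesgue measure on the probability simplex `S_K`. -/
noncomputable def simplexMeasure (K : ℕ) : Measure (Fin K → ℝ) :=
  Measure.map (fillMap K)
    (volume.restrict {u : Fin (K - 1) → ℝ | (∀ j, 0 ≤ u j) ∧ ∑ j, u j ≤ 1})

/-- The unnormalized Concrete density `h(x) = (∑_j β_j/x_j^τ)^{-K} ∏_i x_i^{-(τ+1)}`. -/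
noncomputable def hfun (K : ℕ) (β : Fin K → ℝ) (τ : ℝ) (x : Fin K → ℝ) : ℝ :=
  (∑ j, β j / x j ^ τ) ^ (-(K : ℝ)) * ∏ i, x i ^ (-(τ + 1))

/-- `k(x) = ∑_j β_j/x_j^τ`. -/
noncomputable def kfun (K : ℕ) (β : Fin K → ℝ) (τ : ℝ) (x : Fin K → ℝ) : ℝ :=
  ∑ j, β j / x j ^ τ

/-- `J_0 = 1/((K−1)! τ^{K−1} ∏_i β_i)`. -/
noncomputable def J0 (K : ℕ) (β : Fin K → ℝ) (τ : ℝ) : ℝ :=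
  1 / ((Nat.factorial (K - 1) : ℝ) * τ ^ (K - 1) * ∏ i, β i)

/-- Kronecker delta. -/
def kd {K : ℕ} (a b : Fin K) : ℝ := if a = b then 1 else 0

/-!
The integral of `∏ y_l ^ (α m_l - 1) exp (-b_l y_l ^ α)` over the positive orthant can be computed
in two ways: directly, as a product of Gamma integrals, or in the coordinates `y = s • x` with
`s = ∑ y_l` and `x` in the simplex, where the integral over `s` is again a Gamma integral, of
parameters `∑ m_l` and `∑ b_l x_l ^ α`. Comparing the two evaluates
`∫ ∏ x_l ^ (α m_l - 1) (∑ b_l x_l ^ α) ^ (-∑ m_l)` over the simplex, a Dirichlet integral with a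
rate for each coordinate and a power substitution. The Fisher information is the case `α = -τ`,
`b = β`, `m_l = 1 + δ_{il} + δ_{jl}`.
-/

section SimplexPolar

theorem fillMap_succ (n : ℕ) (u : Fin n → ℝ) :
    fillMap (n + 1) u = Fin.snoc u (1 - ∑ j, u j) := by
  ext l
  cases l using Fin.lastCases <;> simp [fillMap]

theorem fillMap_succ_mem_stdSimplex {n : ℕ} {u : Fin n → ℝ} :
    fillMap (n + 1) u ∈ stdSimplex ℝ (Fin (n + 1)) ↔ (∀ j, 0 ≤ u j) ∧ ∑ j, u j ≤ 1 := by
  simp [stdSimplex, fillMap_succ, Fin.forall_fin_succ', Fin.sum_univ_castSucc]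

theorem sum_fillMap_succ (n : ℕ) (u : Fin n → ℝ) : ∑ l, fillMap (n + 1) u l = 1 := by
  simp [fillMap_succ, Fin.sum_univ_castSucc]

theorem measurable_fillMap (K : ℕ) : Measurable (fillMap K) := by
  refine measurable_pi_iff.2 fun l => ?_
  unfold fillMap
  split_ifs <;> fun_prop

theorem measurableSet_stdSimplex (ι : Type*) [Fintype ι] : MeasurableSet (stdSimplex ℝ ι) :=
  (isClosed_stdSimplex (𝕜 := ℝ) (ι := ι)).measurableSet

theorem simplexMeasure_succ (n : ℕ) :
    simplexMeasure (n + 1) =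
      (Measure.map (fillMap (n + 1)) volume).restrict (stdSimplex ℝ (Fin (n + 1))) := by
  rw [Measure.restrict_map (measurable_fillMap _) (measurableSet_stdSimplex _), simplexMeasure]
  congr 2
  ext u
  exact fillMap_succ_mem_stdSimplex.symm

theorem ae_simplexMeasure_mem_stdSimplex (n : ℕ) :
    ∀ᵐ x ∂simplexMeasure (n + 1), x ∈ stdSimplex ℝ (Fin (n + 1)) := by
  rw [simplexMeasure_succ]
  exact ae_restrict_mem (measurableSet_stdSimplex _)

theorem lintegral_eq_lintegral_snoc_sub_sum {n : ℕ} {G : (Fin (n + 1) → ℝ) → ENNReal}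
    (hG : Measurable G) :
    ∫⁻ y, G y = ∫⁻ s : ℝ, ∫⁻ v : Fin n → ℝ, G (Fin.snoc v (s - ∑ j, v j)) := by
  let e := (MeasurableEquiv.piFinSuccAbove (fun _ : Fin (n + 1) => ℝ) (Fin.last n)).symm
  have e_apply (p : ℝ × (Fin n → ℝ)) : e p = Fin.snoc p.2 p.1 := Fin.insertNth_last' _ _
  have hGe : Measurable fun p : ℝ × (Fin n → ℝ) => G (Fin.snoc p.2 p.1) := by
    simpa only [← e_apply, Function.comp_def] using hG.comp e.measurable
  calc ∫⁻ y, G y = ∫⁻ p : ℝ × (Fin n → ℝ), G (Fin.snoc p.2 p.1) := by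
        simp only [← e_apply]
        exact ((volume_preserving_piFinSuccAbove _ (Fin.last n)).symm.lintegral_comp hG).symm
    _ = ∫⁻ v : Fin n → ℝ, ∫⁻ t : ℝ, G (Fin.snoc v t) := lintegral_prod_symm' _ hGe
    _ = ∫⁻ v : Fin n → ℝ, ∫⁻ s : ℝ, G (Fin.snoc v (s - ∑ j, v j)) := by
        congr with v
        exact (lintegral_sub_right_eq_self (fun t => G (Fin.snoc v t)) _).symm
    _ = ∫⁻ s : ℝ, ∫⁻ v : Fin n → ℝ, G (Fin.snoc v (s - ∑ j, v j)) :=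
        lintegral_lintegral_swap <| Measurable.aemeasurable <|
          hGe.comp (f := fun p : (Fin n → ℝ) × ℝ => (p.2 - ∑ j, p.1 j, p.1)) (by fun_prop)

theorem ofReal_abs_pow_mul_lintegral_comp_smul {E : Type*} [NormedAddCommGroup E]
    [NormedSpace ℝ E] [MeasurableSpace E] [BorelSpace E] [FiniteDimensional ℝ E] (μ : Measure E)
    [μ.IsAddHaarMeasure] (f : E → ENNReal) {r : ℝ} (hr : r ≠ 0) :
    ENNReal.ofReal (|r| ^ Module.finrank ℝ E) * ∫⁻ x, f (r • x) ∂μ = ∫⁻ x, f x ∂μ := by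
  have h_map : ∫⁻ x, f (r • x) ∂μ = ∫⁻ x, f x ∂(Measure.map (r • ·) μ) :=
    (lintegral_map_equiv f (Homeomorph.smulOfNeZero r hr).toMeasurableEquiv).symm
  have hr_pow : r ^ Module.finrank ℝ E ≠ 0 := pow_ne_zero _ hr
  rw [h_map, Measure.map_addHaar_smul μ hr, lintegral_smul_measure, smul_eq_mul, ← mul_assoc,
    ← ENNReal.ofReal_mul (by positivity), ← abs_pow, ← abs_mul, mul_inv_cancel₀ hr_pow]
  simp

theorem smul_fillMap_succ {n : ℕ} (s : ℝ) (u : Fin n → ℝ) :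
    s • fillMap (n + 1) u = Fin.snoc (s • u) (s - ∑ j, (s • u) j) := by
  rw [fillMap_succ]
  ext l
  cases l using Fin.lastCases <;> simp [mul_sub, Finset.mul_sum]

theorem lintegral_eq_lintegral_smul_fillMap {n : ℕ} {G : (Fin (n + 1) → ℝ) → ENNReal}
    (hG : Measurable G) :
    ∫⁻ y, G y = ∫⁻ u : Fin n → ℝ, ∫⁻ s : ℝ,
      ENNReal.ofReal (|s| ^ n) * G (s • fillMap (n + 1) u) := by
  have integrand_measurable : Measurable fun p : ℝ × (Fin n → ℝ) =>
      ENNReal.ofReal (|p.1| ^ n) * G (p.1 • fillMap (n + 1) p.2) :=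
    Measurable.mul (by fun_prop)
      (hG.comp (measurable_fst.smul ((measurable_fillMap (n + 1)).comp measurable_snd)))
  calc ∫⁻ y, G y = ∫⁻ s : ℝ, ∫⁻ v : Fin n → ℝ, G (Fin.snoc v (s - ∑ j, v j)) :=
        lintegral_eq_lintegral_snoc_sub_sum hG
    _ = ∫⁻ s : ℝ, ∫⁻ u : Fin n → ℝ,
          ENNReal.ofReal (|s| ^ n) * G (s • fillMap (n + 1) u) := by
        refine lintegral_congr_ae ((Measure.ae_ne volume 0).mono fun s hs => ?_)
        simp only [smul_fillMap_succ]
        rw [lintegral_const_mul' _ _ ENNReal.ofReal_ne_top,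
          ← ofReal_abs_pow_mul_lintegral_comp_smul volume _ hs, Module.finrank_fin_fun]
    _ = ∫⁻ u : Fin n → ℝ, ∫⁻ s : ℝ,
          ENNReal.ofReal (|s| ^ n) * G (s • fillMap (n + 1) u) :=
        lintegral_lintegral_swap integrand_measurable.aemeasurable

theorem smul_nonneg_iff_pos_and_mem_stdSimplex {ι : Type*} [Fintype ι] {s : ℝ} {x : ι → ℝ}
    (hs : s ≠ 0) (hx : ∑ l, x l = 1) : 0 ≤ s • x ↔ 0 < s ∧ x ∈ stdSimplex ℝ ι := by
  refine ⟨fun h => ?_, fun ⟨hs_pos, hx_mem⟩ => smul_nonneg hs_pos.le hx_mem.1⟩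
  have s_nonneg : 0 ≤ s := by
    simpa [← Finset.mul_sum, hx] using Finset.sum_nonneg fun l (_ : l ∈ univ) => h l
  have s_pos := s_nonneg.lt_of_ne' hs
  exact ⟨s_pos, fun l => nonneg_of_mul_nonneg_right (h l) s_pos, hx⟩

theorem setLIntegral_Ici_zero_eq_lintegral_simplexMeasure {n : ℕ}
    {G : (Fin (n + 1) → ℝ) → ENNReal} (hG : Measurable G) :
    ∫⁻ y in Set.Ici 0, G y = ∫⁻ x, ∫⁻ s in Set.Ioi (0 : ℝ),
      ENNReal.ofReal (s ^ n) * G (s • x) ∂volume ∂simplexMeasure (n + 1) := by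
  have radial_measurable : Measurable fun x : Fin (n + 1) → ℝ =>
      ∫⁻ s in Set.Ioi (0 : ℝ), ENNReal.ofReal (s ^ n) * G (s • x) := by
    refine Measurable.lintegral_prod_right ?_
    fun_prop
  rw [simplexMeasure_succ, ← lintegral_indicator (measurableSet_stdSimplex _),
    lintegral_map (radial_measurable.indicator (measurableSet_stdSimplex _)) (measurable_fillMap _),
    ← lintegral_indicator measurableSet_Ici,
    lintegral_eq_lintegral_smul_fillMap (hG.indicator measurableSet_Ici)]
  refine lintegral_congr fun u => ?_
  have smul_mem {s : ℝ} (hs : s ≠ 0) : s • fillMap (n + 1) u ∈ Set.Ici 0 ↔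
      0 < s ∧ fillMap (n + 1) u ∈ stdSimplex ℝ (Fin (n + 1)) :=
    smul_nonneg_iff_pos_and_mem_stdSimplex hs (sum_fillMap_succ n u)
  by_cases hu : fillMap (n + 1) u ∈ stdSimplex ℝ (Fin (n + 1))
  · rw [Set.indicator_of_mem hu, ← lintegral_indicator measurableSet_Ioi]
    refine lintegral_congr_ae ((Measure.ae_ne volume 0).mono fun s hs => ?_)
    by_cases hs_pos : 0 < s
    · simp [Set.indicator, smul_mem hs, hu, hs_pos, abs_of_pos]
    · simp [Set.indicator, smul_mem hs, hs_pos]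
  · rw [Set.indicator_of_notMem hu]
    refine lintegral_eq_zero_of_ae_eq_zero ((Measure.ae_ne volume 0).mono fun s hs => ?_)
    simp [Set.indicator, smul_mem hs, hu]

end SimplexPolar

section GammaKernel

/-- The unnormalized generalized Gamma density `t ^ (α m - 1) exp (-b t ^ α)`, of shape `m`, rate
`b` and power `α`, to be integrated over `(0, ∞)`. A negative `α` gives the Fréchet-type kernels
behind the Concrete distribution. -/
noncomputable def gammaKernel (α m b t : ℝ) : ℝ :=
  t ^ (α * m - 1) * Real.exp (-(b * t ^ α))

variable {α : ℝ}

theorem measurable_gammaKernel (α m b : ℝ) : Measurable (gammaKernel α m b) := by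
  unfold gammaKernel
  fun_prop

theorem gammaKernel_nonneg (α m b : ℝ) {t : ℝ} (ht : 0 ≤ t) : 0 ≤ gammaKernel α m b t := by
  unfold gammaKernel
  positivity

theorem setIntegral_gammaKernel {m b : ℝ} (hα : α ≠ 0) (hm : 0 < m) (hb : 0 < b) :
    ∫ t in Set.Ioi 0, gammaKernel α m b t = b ^ (-m) * Real.Gamma m / |α| := by
  have gamma_integral := Real.integral_rpow_mul_exp_neg_mul_Ioi hm hb
  rw [← integral_comp_rpow_Ioi _ hα, one_div, Real.inv_rpow hb.le, ← Real.rpow_neg hb.le]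
    at gamma_integral
  rw [← gamma_integral, eq_div_iff (abs_ne_zero.2 hα), ← integral_mul_const]
  refine setIntegral_congr_fun measurableSet_Ioi fun t (ht : 0 < t) => ?_
  have split_power : t ^ (α * m - 1) = t ^ (α - 1) * (t ^ α) ^ (m - 1) := by
    rw [← Real.rpow_mul ht.le, ← Real.rpow_add ht]
    ring_nf
  simp only [gammaKernel, split_power, smul_eq_mul]
  ring

theorem integrableOn_gammaKernel {m b : ℝ} (hα : α ≠ 0) (hm : 0 < m) (hb : 0 < b) :
    IntegrableOn (gammaKernel α m b) (Set.Ioi 0) := by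
  refine .of_integral_ne_zero ?_
  rw [setIntegral_gammaKernel hα hm hb]
  positivity

theorem setLIntegral_gammaKernel {m b : ℝ} (hα : α ≠ 0) (hm : 0 < m) (hb : 0 < b) :
    ∫⁻ t in Set.Ioi 0, ENNReal.ofReal (gammaKernel α m b t) =
      ENNReal.ofReal (b ^ (-m) * Real.Gamma m / |α|) := by
  rw [← setIntegral_gammaKernel hα hm hb,
    ofReal_integral_eq_lintegral_ofReal (integrableOn_gammaKernel hα hm hb)]
  exact (ae_restrict_mem measurableSet_Ioi).mono fun t ht => gammaKernel_nonneg α m b (le_of_lt ht)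

theorem setLIntegral_prod_gammaKernel {ι : Type*} [Fintype ι] {m b : ι → ℝ} (hα : α ≠ 0)
    (hm : ∀ l, 0 < m l) (hb : ∀ l, 0 < b l) :
    ∫⁻ y : ι → ℝ in Set.Ici 0, ENNReal.ofReal (∏ l, gammaKernel α (m l) (b l) (y l)) =
      ENNReal.ofReal (∏ l, b l ^ (-m l) * Real.Gamma (m l) / |α|) := by
  have orthant_measure : (volume : Measure (ι → ℝ)).restrict (Set.Ici 0) =
      Measure.pi fun _ : ι => volume.restrict (Set.Ioi (0 : ℝ)) := by
    rw [← Set.pi_univ_Ici, volume_pi, Measure.restrict_pi_pi]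
    simp only [Pi.zero_apply, Measure.restrict_congr_set Ioi_ae_eq_Ici]
  have prod_integrable : Integrable (fun y : ι → ℝ => ∏ l, gammaKernel α (m l) (b l) (y l))
      (volume.restrict (Set.Ici 0)) := by
    rw [orthant_measure]
    exact .fintype_prod fun l => integrableOn_gammaKernel hα (hm l) (hb l)
  rw [← ofReal_integral_eq_lintegral_ofReal prod_integrable, orthant_measure,
    integral_fintype_prod_eq_prod (fun l => gammaKernel α (m l) (b l))]
  · simp only [setIntegral_gammaKernel hα (hm _) (hb _)]
  · exact (ae_restrict_mem measurableSet_Ici).mono fun y hy =>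
      prod_nonneg fun l _ => gammaKernel_nonneg _ _ _ (hy l)

theorem pow_mul_prod_gammaKernel_smul {n : ℕ} (m b : Fin (n + 1) → ℝ) {x : Fin (n + 1) → ℝ}
    (hx : 0 ≤ x) {s : ℝ} (hs : 0 < s) :
    s ^ n * ∏ l, gammaKernel α (m l) (b l) ((s • x) l) =
      (∏ l, x l ^ (α * m l - 1)) * gammaKernel α (∑ l, m l) (∑ l, b l * x l ^ α) s := by
  have kernel_smul (l) : gammaKernel α (m l) (b l) ((s • x) l) =
      s ^ (α * m l - 1) * x l ^ (α * m l - 1) * Real.exp (-(b l * x l ^ α * s ^ α)) := by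
    simp only [gammaKernel, Pi.smul_apply, smul_eq_mul, Real.mul_rpow hs.le (hx l)]
    ring_nf
  have powers_of_s : s ^ n * ∏ l, s ^ (α * m l - 1) = s ^ (α * ∑ l, m l - 1) := by
    rw [← Real.rpow_sum_of_pos hs, ← Real.rpow_natCast, ← Real.rpow_add hs]
    congr 1
    simp [Finset.mul_sum]
    ring
  simp only [kernel_smul, prod_mul_distrib]
  rw [← Real.exp_sum, sum_neg_distrib, ← sum_mul, gammaKernel, ← powers_of_s]
  ring

theorem sum_mul_rpow_pos {ι : Type*} [Fintype ι] {b x : ι → ℝ} (hb : ∀ l, 0 < b l)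
    (hx : x ∈ stdSimplex ℝ ι) : 0 < ∑ l, b l * x l ^ α := by
  have terms_nonneg (l) : 0 ≤ b l * x l ^ α := mul_nonneg (hb l).le (Real.rpow_nonneg (hx.1 l) α)
  obtain ⟨l, -, hl⟩ : ∃ l ∈ univ, 0 < x l := by
    rw [← sum_pos_iff_of_nonneg fun l _ => hx.1 l, hx.2]
    exact one_pos
  exact sum_pos' (fun l _ => terms_nonneg l)
    ⟨l, mem_univ l, mul_pos (hb l) (Real.rpow_pos_of_pos hl α)⟩

theorem setLIntegral_pow_mul_prod_gammaKernel_smul {n : ℕ} {m b x : Fin (n + 1) → ℝ} (hα : α ≠ 0)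
    (hm : ∀ l, 0 < m l) (hb : ∀ l, 0 < b l) (hx : x ∈ stdSimplex ℝ (Fin (n + 1))) :
    ∫⁻ s in Set.Ioi (0 : ℝ), ENNReal.ofReal (s ^ n) *
        ENNReal.ofReal (∏ l, gammaKernel α (m l) (b l) ((s • x) l)) =
      ENNReal.ofReal ((∏ l, x l ^ (α * m l - 1)) * (∑ l, b l * x l ^ α) ^ (-∑ l, m l)) *
        ENNReal.ofReal (Real.Gamma (∑ l, m l) / |α|) := by
  have prod_x_nonneg : 0 ≤ ∏ l, x l ^ (α * m l - 1) :=
    prod_nonneg fun l _ => Real.rpow_nonneg (hx.1 l) _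
  have scale_pos := sum_mul_rpow_pos (α := α) hb hx
  have shape_pos : 0 < ∑ l, m l := sum_pos (fun l _ => hm l) univ_nonempty
  calc _ = ∫⁻ s in Set.Ioi (0 : ℝ), ENNReal.ofReal (∏ l, x l ^ (α * m l - 1)) *
        ENNReal.ofReal (gammaKernel α (∑ l, m l) (∑ l, b l * x l ^ α) s) := by
        refine setLIntegral_congr_fun measurableSet_Ioi fun s (hs : 0 < s) => ?_
        rw [← ENNReal.ofReal_mul (by positivity), pow_mul_prod_gammaKernel_smul m b hx.1 hs,
          ENNReal.ofReal_mul prod_x_nonneg]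
    _ = _ := by
        rw [lintegral_const_mul' _ _ ENNReal.ofReal_ne_top,
          setLIntegral_gammaKernel hα shape_pos scale_pos, ← ENNReal.ofReal_mul prod_x_nonneg,
          ← ENNReal.ofReal_mul (by positivity)]
        ring_nf

theorem lintegral_simplexMeasure_prod_rpow_mul_sum_rpow {n : ℕ} {m b : Fin (n + 1) → ℝ}
    (hα : α ≠ 0) (hm : ∀ l, 0 < m l) (hb : ∀ l, 0 < b l) :
    ∫⁻ x, ENNReal.ofReal ((∏ l, x l ^ (α * m l - 1)) * (∑ l, b l * x l ^ α) ^ (-∑ l, m l))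
        ∂simplexMeasure (n + 1) =
      ENNReal.ofReal ((∏ l, b l ^ (-m l)) * (∏ l, Real.Gamma (m l)) /
        (|α| ^ n * Real.Gamma (∑ l, m l))) := by
  have shape_pos : 0 < ∑ l, m l := sum_pos (fun l _ => hm l) univ_nonempty
  have radial_pos : 0 < Real.Gamma (∑ l, m l) / |α| := by positivity
  have kernel_measurable : Measurable fun y : Fin (n + 1) → ℝ =>
      ENNReal.ofReal (∏ l, gammaKernel α (m l) (b l) (y l)) :=
    (Finset.measurable_prod _ fun l _ =>
      (measurable_gammaKernel _ _ _).comp (measurable_pi_apply l)).ennreal_ofReal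
  have two_evaluations := setLIntegral_Ici_zero_eq_lintegral_simplexMeasure kernel_measurable
  rw [setLIntegral_prod_gammaKernel hα hm hb, lintegral_congr_ae <|
    (ae_simplexMeasure_mem_stdSimplex n).mono fun x hx =>
      setLIntegral_pow_mul_prod_gammaKernel_smul hα hm hb hx,
    lintegral_mul_const' _ _ ENNReal.ofReal_ne_top] at two_evaluations
  rw [(ENNReal.eq_div_iff (ENNReal.ofReal_pos.2 radial_pos).ne' ENNReal.ofReal_ne_top).2
    ((mul_comm _ _).trans two_evaluations.symm), ← ENNReal.ofReal_div_of_pos radial_pos,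
    prod_div_distrib, prod_mul_distrib, prod_const, card_univ, Fintype.card_fin, pow_succ]
  congr 1
  field_simp

theorem integral_simplexMeasure_prod_rpow_mul_sum_rpow {n : ℕ} {m b : Fin (n + 1) → ℝ}
    (hα : α ≠ 0) (hm : ∀ l, 0 < m l) (hb : ∀ l, 0 < b l) :
    ∫ x, (∏ l, x l ^ (α * m l - 1)) * (∑ l, b l * x l ^ α) ^ (-∑ l, m l) ∂simplexMeasure (n + 1) =
      (∏ l, b l ^ (-m l)) * (∏ l, Real.Gamma (m l)) / (|α| ^ n * Real.Gamma (∑ l, m l)) := by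
  have integrand_nonneg : ∀ᵐ x ∂simplexMeasure (n + 1),
      0 ≤ (∏ l, x l ^ (α * m l - 1)) * (∑ l, b l * x l ^ α) ^ (-∑ l, m l) :=
    (ae_simplexMeasure_mem_stdSimplex n).mono fun x hx =>
      mul_nonneg (prod_nonneg fun l _ => Real.rpow_nonneg (hx.1 l) _)
        (Real.rpow_nonneg (sum_mul_rpow_pos hb hx).le _)
  rw [integral_eq_lintegral_of_nonneg_ae integrand_nonneg
      (Measurable.aestronglyMeasurable (by fun_prop)),
    lintegral_simplexMeasure_prod_rpow_mul_sum_rpow hα hm hb, ENNReal.toReal_ofReal]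
  have shape_pos : 0 < ∑ l, m l := sum_pos (fun l _ => hm l) univ_nonempty
  have prod_b_nonneg : 0 ≤ ∏ l, b l ^ (-m l) :=
    prod_nonneg fun l _ => Real.rpow_nonneg (hb l).le _
  have prod_Gamma_nonneg : 0 ≤ ∏ l, Real.Gamma (m l) :=
    prod_nonneg fun l _ => Real.Gamma_nonneg_of_nonneg (hm l).le
  positivity

end GammaKernel

section PairShape

variable {ι : Type*} [DecidableEq ι]

/-- The shape parameters `m_l = 1 + δ_{il} + δ_{jl}` of the Dirichlet integral computing a second
moment in the coordinates `i` and `j`. -/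
def pairShape (i j : ι) : ι → ℝ := 1 + Pi.single i 1 + Pi.single j 1

theorem pairShape_pos (i j l : ι) : 0 < pairShape i j l := by
  simp only [pairShape, Pi.add_apply, Pi.one_apply, Pi.single_apply]
  positivity

theorem sum_pairShape [Fintype ι] (i j : ι) : ∑ l, pairShape i j l = Fintype.card ι + 2 := by
  simp [pairShape, sum_add_distrib]
  ring

theorem prod_Gamma_pairShape [Fintype ι] (i j : ι) :
    ∏ l, Real.Gamma (pairShape i j l) = 1 + if i = j then 1 else 0 := by
  rcases eq_or_ne i j with rfl | hij
  · rw [Fintype.prod_eq_single i fun l hl => by simp [pairShape, hl]]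
    norm_num [pairShape, Real.Gamma_ofNat_eq_factorial]
  · rw [Fintype.prod_eq_one _ fun l => ?_, if_neg hij, add_zero]
    by_cases hl : l = i <;> by_cases hl' : l = j <;> simp_all [pairShape, one_add_one_eq_two]

theorem prod_rpow_add_single [Fintype ι] {x a : ι → ℝ} {i : ι} {t : ℝ} (hx : 0 ≤ x i)
    (hat : a i + t ≠ 0) :
    ∏ l, x l ^ (a l + (Pi.single i t : ι → ℝ) l) = (∏ l, x l ^ a l) * x i ^ t := by
  have split_power (l) : x l ^ (a l + (Pi.single i t : ι → ℝ) l) =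
      x l ^ a l * if l = i then x i ^ t else 1 := by
    by_cases hl : l = i
    · subst hl
      simp [Real.rpow_add' hx hat]
    · simp [hl]
  simp only [split_power, prod_mul_distrib, prod_ite_eq', mem_univ, if_true]

theorem prod_rpow_pairShape [Fintype ι] {x : ι → ℝ} {i j : ι} {p q : ℝ} (hi : 0 ≤ x i)
    (hj : 0 ≤ x j) (hp : p < 0) (hq : q ≤ 0) :
    ∏ l, x l ^ (p * pairShape i j l + q) = (∏ l, x l ^ (p + q)) * x i ^ p * x j ^ p := by
  have exponents (l) : p * pairShape i j l + q =
      p + q + (Pi.single i p : ι → ℝ) l + (Pi.single j p : ι → ℝ) l := by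
    simp only [pairShape, Pi.add_apply, Pi.one_apply, Pi.single_apply]
    split_ifs <;> ring
  have exponent_ne_zero : p + q + (Pi.single i p : ι → ℝ) j + p ≠ 0 := by
    rw [Pi.single_apply]
    split_ifs <;> linarith
  simp only [exponents]
  rw [prod_rpow_add_single hj exponent_ne_zero, prod_rpow_add_single hi (by linarith)]

end PairShape

-- Zero coordinates of `x` are allowed: both sides vanish there, since `0 ^ r = 0` for `r ≠ 0` and
-- `a / 0 = 0`.
theorem hfun_mul_div_kfun_sq_eq {K : ℕ} {β : Fin K → ℝ} (hβ : ∀ l, 0 ≤ β l) {τ : ℝ} (hτ : 0 < τ)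
    {x : Fin K → ℝ} (hx : 0 ≤ x) (i j : Fin K) :
    hfun K β τ x * K / (kfun K β τ x ^ 2 * x i ^ τ * x j ^ τ) =
      K * ((∏ l, x l ^ (-τ * pairShape i j l - 1)) *
        (∑ l, β l * x l ^ (-τ)) ^ (-∑ l, pairShape i j l)) := by
  have kfun_eq : ∑ l, β l / x l ^ τ = ∑ l, β l * x l ^ (-τ) := by
    simp only [div_eq_mul_inv, ← Real.rpow_neg (hx _)]
  have kfun_nonneg : 0 ≤ ∑ l, β l * x l ^ (-τ) :=
    sum_nonneg fun l _ => mul_nonneg (hβ l) (Real.rpow_nonneg (hx l) _)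
  have kfun_power : (∑ l, β l * x l ^ (-τ)) ^ (-((K : ℝ) + 2)) =
      (∑ l, β l * x l ^ (-τ)) ^ (-(K : ℝ)) * ((∑ l, β l * x l ^ (-τ)) ^ 2)⁻¹ := by
    rw [neg_add, Real.rpow_add' kfun_nonneg (by linarith [K.cast_nonneg (α := ℝ)]),
      Real.rpow_neg kfun_nonneg 2, Real.rpow_two]
  simp only [sub_eq_add_neg]
  rw [prod_rpow_pairShape (hx i) (hx j) (neg_lt_zero.2 hτ) (by norm_num), sum_pairShape,
    Fintype.card_fin, kfun_power, hfun, kfun, kfun_eq, Real.rpow_neg (hx i), Real.rpow_neg (hx j),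
    neg_add]
  simp only [div_eq_mul_inv, mul_inv]
  ring

/-- The β–β block of the Fisher information of the Concrete distribution:
`∫ h(x) ∂²log h/∂β_i∂β_j = J_0 (1 + δ_ij)/((K+1) β_i β_j)`. -/
theorem concrete_fisher_beta_beta
    (K : ℕ) (hK : 2 ≤ K) (τ : ℝ) (hτ : 0 < τ)
    (β : Fin K → ℝ) (hβ : ∀ i, 0 < β i) (i j : Fin K) :
    ∫ x, hfun K β τ x * (K : ℝ) / (kfun K β τ x ^ 2 * x i ^ τ * x j ^ τ)
        ∂(simplexMeasure K)
      = J0 K β τ * (1 + kd i j) / (((K : ℝ) + 1) * β i * β j) := by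
  obtain ⟨n, rfl⟩ : ∃ n, K = n + 1 := ⟨K - 1, by omega⟩
  have integrand_eq := (ae_simplexMeasure_mem_stdSimplex n).mono fun x hx =>
    hfun_mul_div_kfun_sq_eq (fun l => (hβ l).le) hτ hx.1 i j
  have prod_β : ∏ l, β l ^ (-pairShape i j l) = (∏ l, β l)⁻¹ * (β i)⁻¹ * (β j)⁻¹ := by
    simpa [Real.rpow_neg_one] using
      prod_rpow_pairShape (p := -1) (q := 0) (hβ i).le (hβ j).le (by norm_num) le_rfl
  have gamma_sum : Real.Gamma (∑ l, pairShape i j l) = (n + 2) * ((n + 1) * n.factorial) := by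
    rw [sum_pairShape, Fintype.card_fin]
    convert Real.Gamma_nat_eq_factorial (n + 2) using 1
    · push_cast; ring_nf
    · push_cast [Nat.factorial_succ]; ring
  rw [integral_congr_ae integrand_eq, integral_const_mul,
    integral_simplexMeasure_prod_rpow_mul_sum_rpow (neg_ne_zero.2 hτ.ne') (pairShape_pos i j) hβ,
    prod_β, prod_Gamma_pairShape, gamma_sum, abs_neg, abs_of_pos hτ, J0, kd, Nat.add_sub_cancel]
  push_cast
  field_simp
  ring
end

section
/- Let K ≥ 2, τ > 0, and β ∈ ℝ^K with all β_i > 0. Define h(x) = (∑_{j=1}^K β_j/x_j^τ)^{−K} ∏_{i=1}^K x_i^{−(τ+1)}, k(x) = ∑_{j=1}^K β_j/x_j^τ, and J_0 = 1/((K−1)! τ^{K−1} ∏_{i=1}^K β_i). Then for each index i: ∫_{S_K} h(x) · K [ log x_i/(k(x) x_i^τ) − (∑_{k=1}^K (β_k/x_k^τ) log x_k)/(k(x)² x_i^τ) ] d^{K−1}x = −J_0 (∑_{k=1}^K log β_k − K log β_i) / ((K+1) β_i τ). (The integrand equals h(x) ∂² log h(x)/∂β_i ∂τ, so this computes the mixed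 β–τ components of the Fisher information of the Concrete distribution.) -/
open MeasureTheory Finset

/-!
Let `Y_j` be independent Fréchet variables with densities `τ β_j y^(-τ-1) exp (-β_j y^(-τ))`, so
that the `T_j = β_j Y_j^(-τ)` are independent standard exponential variables. In polar coordinates
`y = s x` for the `ℓ¹` norm, with `x` in the simplex and Jacobian `s^(K-1)`, the joint law becomes
a constant times `h(x) κ^(K-1) exp (-κ) dκ dx` with `κ = k(x) s^(-τ)`. If `F` is homogeneous of
degree `-mτ`, the radial integral is therefore a Gamma integral, and
`J_0 E[F(Y)] = K (K + 1) ⋯ (K + m - 1) ∫ h k^(-m) F` over the simplex.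

Up to the factor `K / β_i`, the Fisher integrand is `h k^(-2) F`, where
`F(Y) = ∑_k T_i T_k (log Y_i - log Y_k)` is homogeneous of degree `-2τ`. Since
`τ log Y_j = log β_j - log T_j`, independence gives
`E[T_i T_k (log Y_i - log Y_k)] = (log β_i - log β_k) / τ`: the constant `E[T log T]` cancels.
-/

section WithDensity

variable {α : Type*} {mα : MeasurableSpace α} {μ : Measure α} {f g : α → ℝ}

lemma integral_withDensity_ofReal (hf : AEMeasurable f μ) (hf0 : 0 ≤ᵐ[μ] f) :
    ∫ x, g x ∂μ.withDensity (fun x => ENNReal.ofReal (f x)) = ∫ x, f x * g x ∂μ := by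
  rw [integral_withDensity_eq_integral_toReal_smul₀ hf.ennreal_ofReal (by simp)]
  refine integral_congr_ae ?_
  filter_upwards [hf0] with x hx
  rw [ENNReal.toReal_ofReal hx, smul_eq_mul]

lemma integrable_withDensity_ofReal_iff (hf : AEMeasurable f μ) (hf0 : 0 ≤ᵐ[μ] f) :
    Integrable g (μ.withDensity fun x => ENNReal.ofReal (f x)) ↔
      Integrable (fun x => f x * g x) μ := by
  rw [integrable_withDensity_iff_integrable_smul₀' hf.ennreal_ofReal (by simp)]
  refine integrable_congr ?_
  filter_upwards [hf0] with x hx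
  rw [ENNReal.toReal_ofReal hx, smul_eq_mul]

end WithDensity

section Pi

open ProbabilityTheory

variable {ι : Type*} [Fintype ι] {α : ι → Type*} [∀ i, MeasurableSpace (α i)]
  {μ : ∀ i, Measure (α i)}

lemma pi_withDensity_ofReal [∀ i, SigmaFinite (μ i)] {f : ∀ i, α i → ℝ}
    (hf : ∀ i, Integrable (f i) (μ i)) (hf0 : ∀ i, 0 ≤ᵐ[μ i] f i) :
    Measure.pi (fun i => (μ i).withDensity fun x => ENNReal.ofReal (f i x)) =
      (Measure.pi μ).withDensity fun x => ENNReal.ofReal (∏ i, f i (x i)) := by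
  have := fun i => isFiniteMeasure_withDensity_ofReal (hf i).2
  refine Measure.pi_eq fun s hs => ?_
  have hf_on : ∀ i, Integrable (f i) ((μ i).restrict (s i)) := fun i => (hf i).restrict
  have hprod_nonneg : 0 ≤ᵐ[Measure.pi fun i => (μ i).restrict (s i)]
      fun x => ∏ i, f i (x i) := by
    have hf0_eval : ∀ i, ∀ᵐ x ∂Measure.pi fun i => (μ i).restrict (s i), 0 ≤ f i (x i) :=
      fun i => (Measure.quasiMeasurePreserving_eval _ i).ae (p := fun y => 0 ≤ f i y)
        (ae_restrict_of_ae (hf0 i))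
    filter_upwards [ae_all_iff.2 hf0_eval] with x hx using prod_nonneg fun i _ => hx i
  rw [withDensity_apply _ (.univ_pi hs), Measure.restrict_pi_pi,
    ← ofReal_integral_eq_lintegral_ofReal (.fintype_prod_dep hf_on) hprod_nonneg,
    integral_fintype_prod_eq_prod, ENNReal.ofReal_prod_of_nonneg
      fun i _ => integral_nonneg_of_ae (ae_restrict_of_ae (hf0 i))]
  refine prod_congr rfl fun i _ => ?_
  rw [withDensity_apply _ (hs i),
    ofReal_integral_eq_lintegral_ofReal (hf_on i) (ae_restrict_of_ae (hf0 i))]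

variable [∀ i, IsProbabilityMeasure (μ i)] {i j : ι} {P : α i → ℝ} {Q : α j → ℝ}

lemma indepFun_comp_eval (hij : i ≠ j) (hP : AEMeasurable P (μ i)) (hQ : AEMeasurable Q (μ j)) :
    (fun x : ∀ i, α i => P (x i)) ⟂ᵢ[Measure.pi μ] fun x => Q (x j) := by
  have hid : iIndepFun (fun i (x : ∀ i, α i) => x i) (Measure.pi μ) :=
    iIndepFun_pi (X := fun _ => id) fun _ => aemeasurable_id
  refine (hid.indepFun hij).comp₀ (measurable_pi_apply i).aemeasurable
    (measurable_pi_apply j).aemeasurable ?_ ?_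
  all_goals rwa [(measurePreserving_eval μ _).map_eq]

lemma integrable_eval_mul_eval (hij : i ≠ j) (hP : Integrable P (μ i)) (hQ : Integrable Q (μ j)) :
    Integrable (fun x => P (x i) * Q (x j)) (Measure.pi μ) :=
  (indepFun_comp_eval hij hP.aemeasurable hQ.aemeasurable).integrable_mul
    (integrable_comp_eval hP) (integrable_comp_eval hQ)

lemma integral_eval_mul_eval (hij : i ≠ j) (hP : Integrable P (μ i)) (hQ : Integrable Q (μ j)) :
    ∫ x, P (x i) * Q (x j) ∂Measure.pi μ = (∫ x, P x ∂μ i) * ∫ x, Q x ∂μ j := by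
  rw [(indepFun_comp_eval hij hP.aemeasurable hQ.aemeasurable).integral_fun_mul_eq_mul_integral
    (integrable_comp_eval hP).1 (integrable_comp_eval hQ).1,
    integral_comp_eval hP.1, integral_comp_eval hQ.1]

end Pi

section Exponential

open ProbabilityTheory

variable {r : ℝ}

lemma expMeasure_eq_withDensity (r : ℝ) :
    expMeasure r = (volume.restrict (Set.Ioi 0)).withDensity
      fun t => ENNReal.ofReal (r * Real.exp (-(r * t))) := by
  rw [expMeasure, gammaMeasure, Measure.restrict_congr_set Ioi_ae_eq_Ici,
    ← withDensity_indicator measurableSet_Ici]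
  refine congrArg _ (funext fun t => ?_)
  by_cases ht : 0 ≤ t <;> simp [gammaPDF_eq, Set.indicator, ht]

lemma integrable_pow_expMeasure (hr : 0 < r) (m : ℕ) :
    Integrable (fun t => t ^ m) (expMeasure r) := by
  rw [expMeasure_eq_withDensity, integrable_withDensity_ofReal_iff (by fun_prop)
    (.of_forall fun t => by positivity)]
  refine ((integrableOn_rpow_mul_exp_neg_mul_rpow (p := 1) (s := m)
    (by linarith [m.cast_nonneg (α := ℝ)]) one_pos hr).const_mul r).congr (.of_forall fun t => ?_)
  simp only [Real.rpow_natCast, Real.rpow_one, neg_mul]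
  ring

lemma integral_pow_expMeasure (hr : 0 < r) (m : ℕ) :
    ∫ t, t ^ m ∂expMeasure r = m.factorial / r ^ m := by
  have hGamma := Real.integral_rpow_mul_exp_neg_mul_Ioi (a := m + 1) (by positivity) hr
  rw [expMeasure_eq_withDensity, integral_withDensity_ofReal (by fun_prop)
    (.of_forall fun t => by positivity)]
  simp only [add_sub_cancel_right, Real.rpow_natCast] at hGamma
  simp only [mul_assoc, mul_comm (Real.exp _), integral_const_mul, hGamma,
    Real.Gamma_nat_eq_factorial]
  rw [← Nat.cast_succ, Real.rpow_natCast, one_div, inv_pow, pow_succ]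
  field_simp

lemma abs_mul_log_le {t : ℝ} (ht : 0 < t) : |t * Real.log t| ≤ 1 + t ^ 2 := by
  have hlog_le := Real.log_le_sub_one_of_pos ht
  have hle_log := Real.one_sub_inv_le_log_of_pos ht
  have hmul_inv : t * t⁻¹ = 1 := mul_inv_cancel₀ ht.ne'
  rw [abs_le]
  constructor <;> nlinarith

lemma integrable_mul_log_expMeasure (hr : 0 < r) :
    Integrable (fun t => t * Real.log t) (expMeasure r) := by
  have := isProbabilityMeasure_expMeasure hr
  have hpos : ∀ᵐ t ∂expMeasure r, 0 < t := by
    rw [expMeasure_eq_withDensity]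
    exact (withDensity_absolutelyContinuous _ _).ae_le (ae_restrict_mem measurableSet_Ioi)
  refine ((integrable_const 1).add (integrable_pow_expMeasure hr 2)).mono' (by fun_prop) ?_
  filter_upwards [hpos] with t ht using abs_mul_log_le ht

end Exponential

section Frechet

open ProbabilityTheory

variable {τ b : ℝ}

/-- The density on `(0, ∞)` of the Fréchet distribution with shape `τ` and scale `b ^ (1 / τ)`,
the law of `exp X` for a Gumbel variable `X` of location `log b / τ` and scale `1 / τ`. It is not
truncated: only its values at positive `y` are meaningful. -/
noncomputable def frechetPDFReal (τ b y : ℝ) : ℝ :=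
  τ * b * y ^ (-τ - 1) * Real.exp (-(b * y ^ (-τ)))

/-- The Fréchet distribution with shape `τ` and scale `b ^ (1 / τ)`, as a measure on `ℝ`. -/
noncomputable def frechetMeasure (τ b : ℝ) : Measure ℝ :=
  (volume.restrict (Set.Ioi 0)).withDensity fun y => ENNReal.ofReal (frechetPDFReal τ b y)

lemma measurable_frechetPDFReal (τ b : ℝ) : Measurable (frechetPDFReal τ b) := by
  unfold frechetPDFReal
  fun_prop

lemma frechetPDFReal_nonneg (hτ : 0 ≤ τ) (hb : 0 ≤ b) {y : ℝ} (hy : 0 ≤ y) :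
    0 ≤ frechetPDFReal τ b y := by
  unfold frechetPDFReal
  positivity

lemma ae_frechetPDFReal_nonneg (hτ : 0 ≤ τ) (hb : 0 ≤ b) :
    0 ≤ᵐ[volume.restrict (Set.Ioi 0)] frechetPDFReal τ b :=
  (ae_restrict_iff' measurableSet_Ioi).2
    (.of_forall fun _ hy => frechetPDFReal_nonneg hτ hb (le_of_lt hy))

lemma injOn_mul_rpow_Ioi {p : ℝ} (hp : p ≠ 0) (hb : b ≠ 0) :
    Set.InjOn (fun y : ℝ => b * y ^ p) (Set.Ioi 0) := fun _ hx _ hy hxy =>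
  (Real.rpow_left_inj (le_of_lt hx) (le_of_lt hy) hp).1 (mul_left_cancel₀ hb hxy)

lemma image_mul_rpow_Ioi {p : ℝ} (hp : p ≠ 0) (hb : 0 < b) :
    (fun y : ℝ => b * y ^ p) '' Set.Ioi 0 = Set.Ioi 0 := by
  refine Set.Subset.antisymm ?_ fun t (ht : 0 < t) => ⟨(t / b) ^ p⁻¹, ?_, ?_⟩
  · rintro _ ⟨y, hy : 0 < y, rfl⟩
    exact mul_pos hb (Real.rpow_pos_of_pos hy p)
  · exact Real.rpow_pos_of_pos (div_pos ht hb) _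
  · simp only [Real.rpow_inv_rpow (div_pos ht hb).le hp, mul_div_cancel₀ t hb.ne']

lemma map_frechetMeasure (hτ : 0 < τ) (hb : 0 < b) :
    (frechetMeasure τ b).map (fun y => b * y ^ (-τ)) = expMeasure 1 := by
  refine Measure.ext_of_lintegral _ fun g hg => ?_
  have hderiv : ∀ y ∈ Set.Ioi (0 : ℝ), HasDerivWithinAt (fun y => b * y ^ (-τ))
      (b * (-τ * y ^ (-τ - 1))) (Set.Ioi 0) y := fun y hy =>
    ((Real.hasDerivAt_rpow_const (.inl (ne_of_gt hy))).const_mul b).hasDerivWithinAt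
  have hchange := lintegral_image_eq_lintegral_abs_deriv_mul measurableSet_Ioi hderiv
    (injOn_mul_rpow_Ioi (neg_ne_zero.2 hτ.ne') hb.ne')
    fun t => ENNReal.ofReal (Real.exp (-t)) * g t
  rw [image_mul_rpow_Ioi (neg_ne_zero.2 hτ.ne') hb] at hchange
  rw [lintegral_map hg (by fun_prop), frechetMeasure, expMeasure_eq_withDensity,
    lintegral_withDensity_eq_lintegral_mul _ (measurable_frechetPDFReal τ b).ennreal_ofReal
      (by fun_prop),
    lintegral_withDensity_eq_lintegral_mul _ (by fun_prop) hg]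
  simp only [Pi.mul_apply, one_mul, hchange]
  refine setLIntegral_congr_fun measurableSet_Ioi fun y (hy : 0 < y) => ?_
  have habs : |b * (-τ * y ^ (-τ - 1))| = τ * b * y ^ (-τ - 1) := by
    rw [abs_of_nonpos] <;> nlinarith [mul_pos (mul_pos hτ hb) (Real.rpow_pos_of_pos hy (-τ - 1))]
  rw [← mul_assoc, habs, ← ENNReal.ofReal_mul (by positivity), frechetPDFReal]

lemma isProbabilityMeasure_frechetMeasure (hτ : 0 < τ) (hb : 0 < b) :
    IsProbabilityMeasure (frechetMeasure τ b) := by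
  have := isProbabilityMeasure_expMeasure one_pos
  rw [← map_frechetMeasure hτ hb] at this
  exact Measure.isProbabilityMeasure_of_map fun y => b * y ^ (-τ)

lemma integrable_frechetMeasure_comp_iff (hτ : 0 < τ) (hb : 0 < b) {g : ℝ → ℝ} (hg : Measurable g) :
    Integrable (fun y => g (b * y ^ (-τ))) (frechetMeasure τ b) ↔ Integrable g (expMeasure 1) := by
  rw [← map_frechetMeasure hτ hb, integrable_map_measure hg.aestronglyMeasurable (by fun_prop)]
  rfl

lemma integral_frechetMeasure_comp (hτ : 0 < τ) (hb : 0 < b) {g : ℝ → ℝ} (hg : Measurable g) :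
    ∫ y, g (b * y ^ (-τ)) ∂frechetMeasure τ b = ∫ t, g t ∂expMeasure 1 := by
  rw [← map_frechetMeasure hτ hb, integral_map (by fun_prop) hg.aestronglyMeasurable]

lemma ae_pos_frechetMeasure (τ b : ℝ) : ∀ᵐ y ∂frechetMeasure τ b, 0 < y :=
  (withDensity_absolutelyContinuous _ _).ae_le (ae_restrict_mem measurableSet_Ioi)

lemma mul_rpow_neg_mul_log (hτ : τ ≠ 0) (hb : b ≠ 0) {y : ℝ} (hy : 0 < y) :
    b * y ^ (-τ) * Real.log y =
      τ⁻¹ * (Real.log b * (b * y ^ (-τ)) - b * y ^ (-τ) * Real.log (b * y ^ (-τ))) := by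
  rw [Real.log_mul hb (Real.rpow_pos_of_pos hy _).ne', Real.log_rpow hy]
  field_simp
  ring

lemma integrable_frechetMeasure_mul_rpow_neg (hτ : 0 < τ) (hb : 0 < b) :
    Integrable (fun y => b * y ^ (-τ)) (frechetMeasure τ b) := by
  simpa using (integrable_frechetMeasure_comp_iff hτ hb (by fun_prop)).2
    (integrable_pow_expMeasure one_pos 1)

lemma integral_frechetMeasure_mul_rpow_neg (hτ : 0 < τ) (hb : 0 < b) :
    ∫ y, b * y ^ (-τ) ∂frechetMeasure τ b = 1 := by
  simpa using (integral_frechetMeasure_comp hτ hb (by fun_prop)).trans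
    (integral_pow_expMeasure one_pos 1)

lemma integrable_frechetMeasure_mul_rpow_neg_mul_log (hτ : 0 < τ) (hb : 0 < b) :
    Integrable (fun y => b * y ^ (-τ) * Real.log y) (frechetMeasure τ b) := by
  have hint := (((integrable_frechetMeasure_mul_rpow_neg hτ hb).const_mul (Real.log b)).sub
    ((integrable_frechetMeasure_comp_iff hτ hb (by fun_prop)).2
      (integrable_mul_log_expMeasure one_pos))).const_mul τ⁻¹
  refine hint.congr ?_
  filter_upwards [ae_pos_frechetMeasure τ b] with y hy
    using (mul_rpow_neg_mul_log hτ.ne' hb.ne' hy).symm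

lemma integral_frechetMeasure_mul_rpow_neg_mul_log (hτ : 0 < τ) (hb : 0 < b) :
    ∫ y, b * y ^ (-τ) * Real.log y ∂frechetMeasure τ b =
      τ⁻¹ * (Real.log b - ∫ t, t * Real.log t ∂expMeasure 1) := by
  have hlog := (integrable_frechetMeasure_comp_iff hτ hb (by fun_prop)).2
    (integrable_mul_log_expMeasure one_pos)
  have hmul_log : ∀ᵐ y ∂frechetMeasure τ b, b * y ^ (-τ) * Real.log y =
      τ⁻¹ * (Real.log b * (b * y ^ (-τ)) - b * y ^ (-τ) * Real.log (b * y ^ (-τ))) := by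
    filter_upwards [ae_pos_frechetMeasure τ b] with y hy
      using mul_rpow_neg_mul_log hτ.ne' hb.ne' hy
  rw [integral_congr_ae hmul_log, integral_const_mul,
    integral_sub ((integrable_frechetMeasure_mul_rpow_neg hτ hb).const_mul _) hlog,
    integral_const_mul, integral_frechetMeasure_mul_rpow_neg hτ hb, mul_one,
    integral_frechetMeasure_comp hτ hb (g := fun t => t * Real.log t) (by fun_prop)]

lemma integrableOn_frechetPDFReal (hτ : 0 < τ) (hb : 0 < b) :
    IntegrableOn (frechetPDFReal τ b) (Set.Ioi 0) := by
  have := isProbabilityMeasure_frechetMeasure hτ hb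
  simpa only [IntegrableOn, mul_one] using (integrable_withDensity_ofReal_iff
    (measurable_frechetPDFReal τ b).aemeasurable (ae_frechetPDFReal_nonneg hτ.le hb.le)).1
    (integrable_const (μ := frechetMeasure τ b) (1 : ℝ))

lemma integral_frechetPDFReal_mul_pow (hτ : 0 < τ) (hb : 0 < b) (m : ℕ) :
    ∫ y in Set.Ioi 0, frechetPDFReal τ b y * (b * y ^ (-τ)) ^ m = m.factorial := by
  rw [← integral_withDensity_ofReal (measurable_frechetPDFReal τ b).aemeasurable
    (ae_frechetPDFReal_nonneg hτ.le hb.le), ← frechetMeasure,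
    integral_frechetMeasure_comp hτ hb (g := fun t => t ^ m) (by fun_prop),
    integral_pow_expMeasure one_pos, one_pow, div_one]

end Frechet

section Simplex

variable {n : ℕ}

/-- The parametrization of the hyperplane `∑ i, x i = s` by its first `n` coordinates. For `s = 1`
this is `fillMap (n + 1)`. -/
def sumSlice (n : ℕ) (s : ℝ) (z : Fin n → ℝ) : Fin (n + 1) → ℝ :=
  Fin.snoc (α := fun _ => ℝ) z (s - ∑ j, z j)

lemma fillMap_succ_s16 (n : ℕ) : fillMap (n + 1) = sumSlice n 1 := rfl

@[simp] lemma sumSlice_castSucc (s : ℝ) (z : Fin n → ℝ) (j : Fin n) :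
    sumSlice n s z j.castSucc = z j := Fin.snoc_castSucc (α := fun _ => ℝ) ..

@[simp] lemma sumSlice_last (s : ℝ) (z : Fin n → ℝ) :
    sumSlice n s z (Fin.last n) = s - ∑ j, z j := Fin.snoc_last (α := fun _ => ℝ) ..

lemma sum_sumSlice (s : ℝ) (z : Fin n → ℝ) : ∑ i, sumSlice n s z i = s := by
  simp [Fin.sum_univ_castSucc]

lemma sumSlice_smul (s c : ℝ) (z : Fin n → ℝ) :
    sumSlice n (c * s) (c • z) = c • sumSlice n s z := by
  ext i
  refine Fin.lastCases ?_ (fun j => ?_) i <;> simp [← mul_sum, mul_sub]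

lemma measurable_sumSlice_uncurry (n : ℕ) : Measurable (Function.uncurry (sumSlice n)) := by
  refine measurable_pi_iff.2 fun i => ?_
  refine Fin.lastCases ?_ (fun j => ?_) i <;>
    simp only [Function.uncurry, sumSlice_castSucc, sumSlice_last] <;> fun_prop

lemma measurable_sumSlice (n : ℕ) (s : ℝ) : Measurable (sumSlice n s) :=
  (measurable_sumSlice_uncurry n).comp measurable_prodMk_left

lemma measurable_fillMap_s16 (n : ℕ) : Measurable (fillMap (n + 1)) := measurable_sumSlice n 1

lemma nonneg_sumSlice_iff {s : ℝ} {z : Fin n → ℝ} :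
    0 ≤ sumSlice n s z ↔ (∀ j, 0 ≤ z j) ∧ ∑ j, z j ≤ s := by
  simp [Pi.le_def, Fin.forall_fin_succ']

lemma lintegral_simplexMeasure {f : (Fin (n + 1) → ℝ) → ENNReal} (hf : Measurable f) :
    ∫⁻ x, f x ∂simplexMeasure (n + 1) =
      ∫⁻ u : Fin n → ℝ, (Set.Ici 0).indicator f (sumSlice n 1 u) := by
  rw [simplexMeasure, lintegral_map hf (measurable_fillMap_s16 n)]
  simp only [fillMap_succ_s16, ← nonneg_sumSlice_iff]
  exact (lintegral_indicator (measurable_sumSlice n 1 measurableSet_Ici)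
    fun u => f (sumSlice n 1 u)).symm

instance isFiniteMeasure_simplexMeasure (n : ℕ) : IsFiniteMeasure (simplexMeasure (n + 1)) := by
  have hsubset : {u : Fin (n + 1 - 1) → ℝ | (∀ j, 0 ≤ u j) ∧ ∑ j, u j ≤ 1} ⊆ Set.Icc 0 1 :=
    fun u hu => ⟨hu.1, fun j => (single_le_sum (fun k _ => hu.1 k) (mem_univ j)).trans hu.2⟩
  have := isFiniteMeasure_restrict.2
    ((measure_mono (μ := volume) hsubset).trans_lt isCompact_Icc.measure_lt_top).ne
  exact Measure.isFiniteMeasure_map _ _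

lemma lintegral_eq_pow_mul_lintegral_comp_smul {g : (Fin n → ℝ) → ENNReal} (hg : Measurable g)
    {s : ℝ} (hs : 0 < s) :
    ∫⁻ z, g z = ENNReal.ofReal (s ^ n) * ∫⁻ u, g (s • u) := by
  have hsn : 0 < s ^ n := pow_pos hs n
  rw [← lintegral_map (g := fun u : Fin n → ℝ => s • u) hg (by fun_prop),
    Measure.map_addHaar_smul _ hs.ne', lintegral_smul_measure, Module.finrank_fin_fun,
    abs_of_pos (inv_pos.2 hsn), smul_eq_mul, ← mul_assoc, ← ENNReal.ofReal_mul hsn.le,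
    mul_inv_cancel₀ hsn.ne', ENNReal.ofReal_one, one_mul]

lemma lintegral_eq_lintegral_sumSlice {f : (Fin (n + 1) → ℝ) → ENNReal} (hf : Measurable f) :
    ∫⁻ y, f y = ∫⁻ s, ∫⁻ z, f (sumSlice n s z) := by
  have hmp := (volume_preserving_piFinSuccAbove (fun _ : Fin (n + 1) => ℝ) (Fin.last n)).symm
  have hsnoc : ∀ p : ℝ × (Fin n → ℝ),
      (MeasurableEquiv.piFinSuccAbove (fun _ : Fin (n + 1) => ℝ) (Fin.last n)).symm p =
        sumSlice n (p.1 + ∑ j, p.2 j) p.2 := fun p => by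
    simp [MeasurableEquiv.piFinSuccAbove, sumSlice, Fin.insertNthEquiv]
  have hf_slice := hf.comp (measurable_sumSlice_uncurry n)
  have hf_shear : Measurable fun p : ℝ × (Fin n → ℝ) => f (sumSlice n (p.1 + ∑ j, p.2 j) p.2) :=
    hf_slice.comp (f := fun p : ℝ × (Fin n → ℝ) => (p.1 + ∑ j, p.2 j, p.2)) (by fun_prop)
  calc ∫⁻ y, f y
      = ∫⁻ p : ℝ × (Fin n → ℝ), f (sumSlice n (p.1 + ∑ j, p.2 j) p.2) := by
        simp only [hmp.lintegral_map_equiv f, hsnoc]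
    _ = ∫⁻ z : Fin n → ℝ, ∫⁻ v, f (sumSlice n (v + ∑ j, z j) z) := by
        rw [Measure.volume_eq_prod, lintegral_prod_symm _ hf_shear.aemeasurable]
    _ = ∫⁻ z, ∫⁻ s, f (sumSlice n s z) :=
        lintegral_congr fun z => lintegral_add_right_eq_self (fun s => f (sumSlice n s z)) _
    _ = ∫⁻ s, ∫⁻ z, f (sumSlice n s z) :=
        lintegral_lintegral_swap (hf_slice.comp measurable_swap).aemeasurable

lemma lintegral_Ici_eq_lintegral_simplexMeasure {f : (Fin (n + 1) → ℝ) → ENNReal}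
    (hf : Measurable f) :
    ∫⁻ y in Set.Ici 0, f y =
      ∫⁻ s in Set.Ioi 0, ENNReal.ofReal (s ^ n) * ∫⁻ x, f (s • x) ∂simplexMeasure (n + 1) := by
  have hf_ind : Measurable ((Set.Ici 0).indicator f) := hf.indicator measurableSet_Ici
  have hsupport : (Function.support fun s : ℝ => ∫⁻ z, (Set.Ici 0).indicator f (sumSlice n s z)) ⊆
      Set.Ici 0 := by
    refine Function.support_subset_iff'.2 fun s hs => ?_
    have hzero : ∀ z, (Set.Ici 0).indicator f (sumSlice n s z) = 0 := fun z => by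
      refine Set.indicator_of_notMem (fun hz : 0 ≤ sumSlice n s z => hs ?_) f
      exact sum_sumSlice s z ▸ sum_nonneg fun i _ => hz i
    simp only [hzero, lintegral_zero]
  rw [← lintegral_indicator measurableSet_Ici, lintegral_eq_lintegral_sumSlice hf_ind,
    ← setLIntegral_eq_of_support_subset hsupport, ← Measure.restrict_congr_set Ioi_ae_eq_Ici]
  refine setLIntegral_congr_fun measurableSet_Ioi fun s (hs : 0 < s) => ?_
  rw [lintegral_simplexMeasure (by fun_prop), lintegral_eq_pow_mul_lintegral_comp_smul
    (g := fun z => (Set.Ici 0).indicator f (sumSlice n s z))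
    (hf_ind.comp (measurable_sumSlice n s)) hs]
  have hsmul : ∀ u, sumSlice n s (s • u) = s • sumSlice n 1 u := fun u => by
    simpa using sumSlice_smul 1 s u
  have hindicator : ∀ x : Fin (n + 1) → ℝ, (Set.Ici 0).indicator f (s • x) =
      (Set.Ici 0).indicator (fun x => f (s • x)) x := fun x => by
    by_cases hx : 0 ≤ x <;> simp [Set.indicator, hx, smul_nonneg_iff_nonneg_of_pos_left hs]
  simp only [hsmul, hindicator]

theorem map_smul_simplexMeasure_prod (n : ℕ) :
    ((simplexMeasure (n + 1)).prod ((volume.restrict (Set.Ioi 0)).withDensity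
      fun s => ENNReal.ofReal (s ^ n))).map (fun p => p.2 • p.1) = volume.restrict (Set.Ici 0) := by
  refine Measure.ext_of_lintegral _ fun f hf => ?_
  have hf_smul : Measurable fun p : (Fin (n + 1) → ℝ) × ℝ => f (p.2 • p.1) := by fun_prop
  rw [lintegral_map hf (by fun_prop), lintegral_prod_symm _ hf_smul.aemeasurable,
    lintegral_withDensity_eq_lintegral_mul _ (by fun_prop) hf_smul.lintegral_prod_left',
    lintegral_Ici_eq_lintegral_simplexMeasure hf]
  rfl

lemma ae_pos_simplexMeasure (n : ℕ) : ∀ᵐ x ∂simplexMeasure (n + 1), ∀ j, 0 < x j := by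
  have hpos : ∀ᵐ y ∂volume.restrict (Set.Ici (0 : Fin (n + 1) → ℝ)), ∀ j, 0 < y j := by
    rw [volume_pi, ← Measure.restrict_congr_set Measure.univ_pi_Ioi_ae_eq_Ici]
    filter_upwards [ae_restrict_mem (.univ_pi fun _ => measurableSet_Ioi)] with y hy j
      using hy j (Set.mem_univ j)
  rw [← map_smul_simplexMeasure_prod] at hpos
  have hprod := Measure.ae_ae_of_ae_prod
    (Measure.measurePreserving_swap.quasiMeasurePreserving.ae (ae_of_ae_map (by fun_prop) hpos))
  have := ae_restrict_neBot.2 (Real.volume_Ioi (a := 0) ▸ ENNReal.top_ne_zero)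
  obtain ⟨s, hs, hs0⟩ := (((ae_withDensity_iff (by fun_prop)).1 hprod).and
    (ae_restrict_mem measurableSet_Ioi)).exists
  rw [Set.mem_Ioi] at hs0
  filter_upwards [hs (by simp [hs0, pow_pos])] with x hx j
    using by simpa [hs0] using hx j

theorem integral_Ici_eq_integral_simplexMeasure {f : (Fin (n + 1) → ℝ) → ℝ}
    (hf : IntegrableOn f (Set.Ici 0)) :
    ∫ y in Set.Ici 0, f y =
      ∫ x, (∫ s in Set.Ioi 0, s ^ n * f (s • x)) ∂simplexMeasure (n + 1) := by
  rw [IntegrableOn, ← map_smul_simplexMeasure_prod] at hf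
  rw [← map_smul_simplexMeasure_prod, integral_map (by fun_prop) hf.1,
    integral_prod (fun p : (Fin (n + 1) → ℝ) × ℝ => f (p.2 • p.1))
      (hf.comp_measurable (by fun_prop))]
  refine integral_congr_ae (.of_forall fun x => integral_withDensity_ofReal (by fun_prop) ?_)
  filter_upwards [ae_restrict_mem measurableSet_Ioi] with s (hs : 0 < s) using pow_nonneg hs.le n

end Simplex

section FrechetVector

variable {ι : Type*} [Fintype ι] {τ : ℝ} {β : ι → ℝ}

lemma pi_frechetMeasure (hτ : 0 < τ) (hβ : ∀ j, 0 < β j) :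
    Measure.pi (fun j => frechetMeasure τ (β j)) = (volume.restrict (Set.Ici 0)).withDensity
      fun y => ENNReal.ofReal (∏ j, frechetPDFReal τ (β j) (y j)) := by
  have hpi := pi_withDensity_ofReal (fun j => integrableOn_frechetPDFReal hτ (hβ j))
    fun j => ae_frechetPDFReal_nonneg hτ.le (hβ j).le
  rwa [← Measure.restrict_pi_pi, Measure.restrict_congr_set Measure.univ_pi_Ioi_ae_eq_Ici] at hpi

lemma measurable_prod_frechetPDFReal (τ : ℝ) (β : ι → ℝ) :
    Measurable fun y : ι → ℝ => ∏ j, frechetPDFReal τ (β j) (y j) :=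
  measurable_prod _ fun j _ => (measurable_frechetPDFReal τ (β j)).comp (measurable_pi_apply j)

lemma ae_prod_frechetPDFReal_nonneg (hτ : 0 ≤ τ) (hβ : ∀ j, 0 ≤ β j) :
    0 ≤ᵐ[volume.restrict (Set.Ici 0)] fun y : ι → ℝ => ∏ j, frechetPDFReal τ (β j) (y j) :=
  (ae_restrict_iff' measurableSet_Ici).2
    (.of_forall fun _ hy => prod_nonneg fun j _ => frechetPDFReal_nonneg hτ (hβ j) (hy j))

lemma integrable_pi_frechetMeasure_iff (hτ : 0 < τ) (hβ : ∀ j, 0 < β j) {F : (ι → ℝ) → ℝ} :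
    Integrable F (Measure.pi fun j => frechetMeasure τ (β j)) ↔
      IntegrableOn (fun y => (∏ j, frechetPDFReal τ (β j) (y j)) * F y) (Set.Ici 0) := by
  rw [pi_frechetMeasure hτ hβ, integrable_withDensity_ofReal_iff
    (measurable_prod_frechetPDFReal τ β).aemeasurable
    (ae_prod_frechetPDFReal_nonneg hτ.le fun j => (hβ j).le), IntegrableOn]

lemma integral_pi_frechetMeasure (hτ : 0 < τ) (hβ : ∀ j, 0 < β j) (F : (ι → ℝ) → ℝ) :
    ∫ y, F y ∂Measure.pi (fun j => frechetMeasure τ (β j)) =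
      ∫ y in Set.Ici 0, (∏ j, frechetPDFReal τ (β j) (y j)) * F y := by
  rw [pi_frechetMeasure hτ hβ, integral_withDensity_ofReal
    (measurable_prod_frechetPDFReal τ β).aemeasurable
    (ae_prod_frechetPDFReal_nonneg hτ.le fun j => (hβ j).le)]

/-- The mixed derivative `∂² log h / ∂β_i ∂τ` multiplied by `k(y)² * β i / K`. Clearing the
denominators in this way leaves a function that is homogeneous in `y`, and whose summands split
into products of functions of a single coordinate. -/
noncomputable def weightedLogDiff (τ : ℝ) (β : ι → ℝ) (i : ι) (y : ι → ℝ) : ℝ :=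
  ∑ k, β i * y i ^ (-τ) * (β k * y k ^ (-τ)) * (Real.log (y i) - Real.log (y k))

lemma weightedLogDiff_smul (β : ι → ℝ) (i : ι) {s : ℝ} (hs : 0 < s) {y : ι → ℝ}
    (hy : ∀ j, 0 < y j) :
    weightedLogDiff τ β i (s • y) = (s ^ (-τ)) ^ 2 * weightedLogDiff τ β i y := by
  simp only [weightedLogDiff, mul_sum, Pi.smul_apply, smul_eq_mul]
  refine sum_congr rfl fun k _ => ?_
  rw [Real.mul_rpow hs.le (hy i).le, Real.mul_rpow hs.le (hy k).le,
    Real.log_mul hs.ne' (hy i).ne', Real.log_mul hs.ne' (hy k).ne']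
  ring

lemma integrable_mul_mul_log_sub_log (hτ : 0 < τ) (hβ : ∀ j, 0 < β j) (i k : ι) :
    Integrable (fun y : ι → ℝ => β i * y i ^ (-τ) * (β k * y k ^ (-τ)) *
      (Real.log (y i) - Real.log (y k))) (Measure.pi fun j => frechetMeasure τ (β j)) := by
  obtain rfl | hik := eq_or_ne i k
  · simp
  have := fun j => isProbabilityMeasure_frechetMeasure hτ (hβ j)
  have hT := fun j => integrable_frechetMeasure_mul_rpow_neg hτ (hβ j)
  have hTlog := fun j => integrable_frechetMeasure_mul_rpow_neg_mul_log hτ (hβ j)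
  have hsplit (t u a b : ℝ) : t * u * (a - b) = t * a * u - t * (u * b) := by ring
  simp only [hsplit]
  exact (integrable_eval_mul_eval (μ := fun j => frechetMeasure τ (β j)) hik (hTlog i) (hT k)).sub
    (integrable_eval_mul_eval (μ := fun j => frechetMeasure τ (β j)) hik (hT i) (hTlog k))

lemma integral_mul_mul_log_sub_log (hτ : 0 < τ) (hβ : ∀ j, 0 < β j) (i k : ι) :
    ∫ y : ι → ℝ, β i * y i ^ (-τ) * (β k * y k ^ (-τ)) * (Real.log (y i) - Real.log (y k))
      ∂Measure.pi (fun j => frechetMeasure τ (β j)) = τ⁻¹ * (Real.log (β i) - Real.log (β k)) := by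
  obtain rfl | hik := eq_or_ne i k
  · simp
  have := fun j => isProbabilityMeasure_frechetMeasure hτ (hβ j)
  have hT := fun j => integrable_frechetMeasure_mul_rpow_neg hτ (hβ j)
  have hTlog := fun j => integrable_frechetMeasure_mul_rpow_neg_mul_log hτ (hβ j)
  have hsplit (t u a b : ℝ) : t * u * (a - b) = t * a * u - t * (u * b) := by ring
  simp only [hsplit]
  rw [integral_sub
      (integrable_eval_mul_eval (μ := fun j => frechetMeasure τ (β j)) hik (hTlog i) (hT k))
      (integrable_eval_mul_eval (μ := fun j => frechetMeasure τ (β j)) hik (hT i) (hTlog k)),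
    integral_eval_mul_eval (μ := fun j => frechetMeasure τ (β j)) hik (hTlog i) (hT k),
    integral_eval_mul_eval (μ := fun j => frechetMeasure τ (β j)) hik (hT i) (hTlog k),
    integral_frechetMeasure_mul_rpow_neg hτ (hβ i), integral_frechetMeasure_mul_rpow_neg hτ (hβ k),
    integral_frechetMeasure_mul_rpow_neg_mul_log hτ (hβ i),
    integral_frechetMeasure_mul_rpow_neg_mul_log hτ (hβ k)]
  ring

lemma integrable_weightedLogDiff (hτ : 0 < τ) (hβ : ∀ j, 0 < β j) (i : ι) :
    Integrable (weightedLogDiff τ β i) (Measure.pi fun j => frechetMeasure τ (β j)) :=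
  integrable_finsetSum _ fun k _ => integrable_mul_mul_log_sub_log hτ hβ i k

lemma integral_weightedLogDiff (hτ : 0 < τ) (hβ : ∀ j, 0 < β j) (i : ι) :
    ∫ y, weightedLogDiff τ β i y ∂Measure.pi (fun j => frechetMeasure τ (β j)) =
      τ⁻¹ * (Fintype.card ι * Real.log (β i) - ∑ k, Real.log (β k)) := by
  simp only [weightedLogDiff]
  rw [integral_finsetSum _ fun k _ => integrable_mul_mul_log_sub_log hτ hβ i k]
  simp only [integral_mul_mul_log_sub_log hτ hβ i, ← mul_sum, sum_sub_distrib,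
    sum_const, card_univ, nsmul_eq_mul]

end FrechetVector

section Concrete

variable {K n : ℕ} {τ : ℝ}

lemma kfun_eq_sum_mul_rpow_neg (β : Fin K → ℝ) {x : Fin K → ℝ} (hx : ∀ j, 0 ≤ x j) :
    kfun K β τ x = ∑ j, β j * x j ^ (-τ) :=
  sum_congr rfl fun j _ => by rw [Real.rpow_neg (hx j), div_eq_mul_inv]

lemma kfun_pos {β x : Fin (n + 1) → ℝ} (hβ : ∀ j, 0 < β j) (hx : ∀ j, 0 < x j) :
    0 < kfun (n + 1) β τ x :=
  sum_pos (fun j _ => div_pos (hβ j) (Real.rpow_pos_of_pos (hx j) τ)) univ_nonempty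

lemma J0_mul_factorial_mul_prod (hτ : τ ≠ 0) {β : Fin (n + 1) → ℝ} (hβ : ∀ j, β j ≠ 0) :
    J0 (n + 1) β τ * (n.factorial * τ ^ n * ∏ j, β j) = 1 := by
  have hfactorial : (n.factorial : ℝ) ≠ 0 := Nat.cast_ne_zero.2 n.factorial_ne_zero
  have hprod : ∏ j, β j ≠ 0 := prod_ne_zero_iff.2 fun j _ => hβ j
  exact one_div_mul_cancel (mul_ne_zero (mul_ne_zero hfactorial (pow_ne_zero n hτ)) hprod)

lemma pow_mul_prod_frechetPDFReal {β x : Fin (n + 1) → ℝ} (hβ : ∀ j, 0 < β j) (hx : ∀ j, 0 < x j)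
    {s : ℝ} (hs : 0 < s) :
    s ^ n * ∏ j, frechetPDFReal τ (β j) (s * x j) =
      τ ^ n * (∏ j, β j) * hfun (n + 1) β τ x *
        (frechetPDFReal τ (kfun (n + 1) β τ x) s * (kfun (n + 1) β τ x * s ^ (-τ)) ^ n) := by
  have hk : 0 < kfun (n + 1) β τ x := kfun_pos hβ hx
  have hfactor : ∀ j, frechetPDFReal τ (β j) (s * x j) =
      τ * s ^ (-τ - 1) * β j * x j ^ (-(τ + 1)) *
        Real.exp (-(s ^ (-τ) * (β j * x j ^ (-τ)))) := fun j => by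
    rw [frechetPDFReal, Real.mul_rpow hs.le (hx j).le, Real.mul_rpow hs.le (hx j).le, neg_add']
    ring_nf
  have hexp : ∏ j, Real.exp (-(s ^ (-τ) * (β j * x j ^ (-τ)))) =
      Real.exp (-(kfun (n + 1) β τ x * s ^ (-τ))) := by
    rw [← Real.exp_sum, sum_neg_distrib, ← mul_sum,
      ← kfun_eq_sum_mul_rpow_neg β fun j => (hx j).le, mul_comm]
  have hpow : (s ^ (-τ)) ^ n = s ^ n * (s ^ (-τ - 1)) ^ n := by
    rw [← mul_pow, Real.rpow_sub_one hs.ne', mul_div_cancel₀ _ hs.ne']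
  have hhfun : hfun (n + 1) β τ x =
      (kfun (n + 1) β τ x ^ (n + 1))⁻¹ * ∏ j, x j ^ (-(τ + 1)) := by
    rw [hfun, ← kfun, Real.rpow_neg hk.le, Real.rpow_natCast]
  simp only [hfactor, prod_mul_distrib, prod_const, card_univ, Fintype.card_fin, hexp]
  rw [hhfun, frechetPDFReal, mul_pow _ _ n, hpow]
  field_simp
  ring

lemma integral_pow_mul_prod_frechetPDFReal (hτ : 0 < τ) {β x : Fin (n + 1) → ℝ}
    (hβ : ∀ j, 0 < β j) (hx : ∀ j, 0 < x j) (m : ℕ) :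
    ∫ s in Set.Ioi 0, s ^ n * (∏ j, frechetPDFReal τ (β j) (s * x j)) * (s ^ (-τ)) ^ m =
      (n + m).factorial * (τ ^ n * ∏ j, β j) * (hfun (n + 1) β τ x / kfun (n + 1) β τ x ^ m) := by
  have hk : 0 < kfun (n + 1) β τ x := kfun_pos hβ hx
  rw [← integral_frechetPDFReal_mul_pow hτ hk, mul_assoc, ← integral_mul_const]
  refine setIntegral_congr_fun measurableSet_Ioi fun s (hs : 0 < s) => ?_
  rw [pow_mul_prod_frechetPDFReal hβ hx hs, pow_add, mul_pow _ _ m]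
  field_simp

theorem J0_mul_integral_pi_frechetMeasure (hτ : 0 < τ) {β : Fin (n + 1) → ℝ}
    (hβ : ∀ j, 0 < β j) {m : ℕ} {F : (Fin (n + 1) → ℝ) → ℝ}
    (hF : Integrable F (Measure.pi fun j => frechetMeasure τ (β j)))
    (hF_smul : ∀ s : ℝ, 0 < s → ∀ x : Fin (n + 1) → ℝ, (∀ j, 0 < x j) →
      F (s • x) = (s ^ (-τ)) ^ m * F x) :
    J0 (n + 1) β τ * ∫ y, F y ∂Measure.pi (fun j => frechetMeasure τ (β j)) =
      (n + 1).ascFactorial m *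
        ∫ x, hfun (n + 1) β τ x / kfun (n + 1) β τ x ^ m * F x ∂simplexMeasure (n + 1) := by
  have hradial : ∀ᵐ x ∂simplexMeasure (n + 1),
      ∫ s in Set.Ioi 0, s ^ n * ((∏ j, frechetPDFReal τ (β j) ((s • x) j)) * F (s • x)) =
        (n + m).factorial * (τ ^ n * ∏ j, β j) *
          (hfun (n + 1) β τ x / kfun (n + 1) β τ x ^ m * F x) := by
    filter_upwards [ae_pos_simplexMeasure n] with x hx
    rw [← mul_assoc, ← integral_pow_mul_prod_frechetPDFReal hτ hβ hx, ← integral_mul_const]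
    refine setIntegral_congr_fun measurableSet_Ioi fun s (hs : 0 < s) => ?_
    simp only [hF_smul s hs x hx, Pi.smul_apply, smul_eq_mul]
    ring
  rw [integral_pi_frechetMeasure hτ hβ, integral_Ici_eq_integral_simplexMeasure
    ((integrable_pi_frechetMeasure_iff hτ hβ).1 hF), integral_congr_ae hradial, integral_const_mul,
    ← Nat.factorial_mul_ascFactorial, Nat.cast_mul]
  linear_combination ((n + 1).ascFactorial m *
    ∫ x, hfun (n + 1) β τ x / kfun (n + 1) β τ x ^ m * F x ∂simplexMeasure (n + 1)) *
      J0_mul_factorial_mul_prod hτ.ne' fun j => (hβ j).ne'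

lemma log_div_sub_sum_div_eq_weightedLogDiff {β x : Fin (n + 1) → ℝ} (hβ : ∀ j, 0 < β j)
    (hx : ∀ j, 0 < x j) (i : Fin (n + 1)) :
    Real.log (x i) / (kfun (n + 1) β τ x * x i ^ τ) -
        (∑ k, β k / x k ^ τ * Real.log (x k)) / (kfun (n + 1) β τ x ^ 2 * x i ^ τ) =
      weightedLogDiff τ β i x / (β i * kfun (n + 1) β τ x ^ 2) := by
  have hk : kfun (n + 1) β τ x ≠ 0 := (kfun_pos hβ hx).ne'
  have hi : x i ^ τ ≠ 0 := (Real.rpow_pos_of_pos (hx i) τ).ne'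
  have hsum : weightedLogDiff τ β i x = β i / x i ^ τ *
      (kfun (n + 1) β τ x * Real.log (x i) - ∑ k, β k / x k ^ τ * Real.log (x k)) := by
    rw [kfun, sum_mul, ← sum_sub_distrib, mul_sum]
    refine sum_congr rfl fun k _ => ?_
    rw [Real.rpow_neg (hx i).le, Real.rpow_neg (hx k).le]
    ring
  have hβi := (hβ i).ne'
  rw [hsum]
  field_simp

end Concrete

/-- The mixed β–τ components of the Fisher information of the Concrete distribution:
`∫ h(x) ∂²log h/∂β_i∂τ = −J_0 (∑_k log β_k − K log β_i)/((K+1) β_i τ)`. -/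
theorem concrete_fisher_beta_tau
    (K : ℕ) (hK : 2 ≤ K) (τ : ℝ) (hτ : 0 < τ)
    (β : Fin K → ℝ) (hβ : ∀ i, 0 < β i) (i : Fin K) :
    ∫ x, hfun K β τ x * ((K : ℝ) *
          (Real.log (x i) / (kfun K β τ x * x i ^ τ)
            - (∑ k, (β k / x k ^ τ) * Real.log (x k)) / (kfun K β τ x ^ 2 * x i ^ τ)))
        ∂(simplexMeasure K)
      = -(J0 K β τ * ((∑ k, Real.log (β k)) - (K : ℝ) * Real.log (β i)) /
            (((K : ℝ) + 1) * β i * τ)) := by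
  obtain ⟨n, rfl⟩ : ∃ n, K = n + 1 := Nat.exists_eq_add_one.2 i.pos
  have hpolar := J0_mul_integral_pi_frechetMeasure hτ hβ (integrable_weightedLogDiff hτ hβ i)
    fun s hs x hx => weightedLogDiff_smul β i hs hx
  have hintegrand : ∀ᵐ x ∂simplexMeasure (n + 1), hfun (n + 1) β τ x * (((n + 1 : ℕ) : ℝ) *
      (Real.log (x i) / (kfun (n + 1) β τ x * x i ^ τ) -
        (∑ k, (β k / x k ^ τ) * Real.log (x k)) / (kfun (n + 1) β τ x ^ 2 * x i ^ τ))) =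
      ((n + 1 : ℕ) : ℝ) / β i *
        (hfun (n + 1) β τ x / kfun (n + 1) β τ x ^ 2 * weightedLogDiff τ β i x) := by
    filter_upwards [ae_pos_simplexMeasure n] with x hx
    rw [log_div_sub_sum_div_eq_weightedLogDiff hβ hx]
    ring
  rw [integral_weightedLogDiff hτ hβ, Fintype.card_fin] at hpolar
  rw [integral_congr_ae hintegrand, integral_const_mul]
  have hβi := (hβ i).ne'
  simp only [Nat.ascFactorial_succ, Nat.ascFactorial_zero] at hpolar
  push_cast at hpolar ⊢
  field_simp at hpolar ⊢
  linear_combination -hpolar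
end
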